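/- Let K be a field of characteristic 0 containing a primitive p^n-th root of unity. Then the kernel of the multiplication-by-p map on the Milnor K-group K_q^M(K), which equals {ζ_p} · K_{q-1}^M(K) for ζ_p a primitive p-th root of unity, is contained in p^{n-1} K_q^M(K). Consequently, if x ∈ K_q^M(K) satisfies p x ∈ p^n K_q^M(K), then x ∈ p^{n-1} K_q^M(K). -/

import Mathlib

set_option autoImplicit false

/-! Milnor K-theory: generators and relations. -/

/-- The subgroup of relations (multilinearity and Steinberg) defining the `q`-th
Milnor K-group of a field `K`. -/
def MilnorKRel (K : Type*) [Field K] (q : ℕ) :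
    AddSubgroup (FreeAbelianGroup (Fin q → Kˣ)) :=
  AddSubgroup.closure
    ({x | ∃ (f : Fin q → Kˣ) (i : Fin q) (a b : Kˣ),
        x = FreeAbelianGroup.of (Function.update f i (a * b))
          - FreeAbelianGroup.of (Function.update f i a)
          - FreeAbelianGroup.of (Function.update f i b)} ∪
     {x | ∃ (f : Fin q → Kˣ) (i j : Fin q), i ≠ j ∧ (f i : K) + (f j : K) = 1 ∧
        x = FreeAbelianGroup.of f})

/-- The `q`-th Milnor K-group `K_q^M(K)` of a field `K`. -/
def MilnorK (K : Type*) [Field K] (q : ℕ) : Type _ :=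
  FreeAbelianGroup (Fin q → Kˣ) ⧸ MilnorKRel K q

instance (K : Type*) [Field K] (q : ℕ) : AddCommGroup (MilnorK K q) :=
  QuotientAddGroup.Quotient.addCommGroup _

/-- The Milnor symbol `{f 0, …, f (q-1)}` in `K_q^M(K)`. -/
def MilnorK.symbol (K : Type*) [Field K] (q : ℕ) (f : Fin q → Kˣ) : MilnorK K q :=
  QuotientAddGroup.mk (FreeAbelianGroup.of f)


/-- The subgroup `c·A` of an additive group `A`. -/
def pPowSub (A : Type*) [AddCommGroup A] (c : ℕ) : AddSubgroup A :=
  AddSubgroup.closure {x | ∃ y : A, x = c • y}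

/-! A primitive `p`-th root of unity is a `p ^ (n - 1)`-th power `η ^ p ^ (n - 1)`, so
`{ζ_p, a₁, …, a_r} = p ^ (n - 1) • {η, a₁, …, a_r}`; by Suslin's theorem these symbols generate the
`p`-torsion. If now `p • x = p ^ n • y`, then `x - p ^ (n - 1) • y` is `p`-torsion. -/

section Multiples

variable {A : Type*} [AddCommGroup A] {c m : ℕ} {x : A}

theorem pPowSub_eq_range_nsmul (c : ℕ) : pPowSub A c = (nsmulAddMonoidHom (α := A) c).range := by
  rw [pPowSub, ← AddSubgroup.closure_eq (nsmulAddMonoidHom (α := A) c).range]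
  congr 1
  ext x
  simp [eq_comm]

theorem mem_pPowSub : x ∈ pPowSub A c ↔ ∃ y : A, c • y = x := by
  rw [pPowSub_eq_range_nsmul]
  exact AddMonoidHom.mem_range

theorem nsmul_mem_pPowSub (c : ℕ) (x : A) : c • x ∈ pPowSub A c :=
  mem_pPowSub.2 ⟨x, rfl⟩

theorem mem_pPowSub_of_nsmul_mem_pPowSub_mul
    (torsion_le : ∀ x : A, m • x = 0 → x ∈ pPowSub A c) (hx : m • x ∈ pPowSub A (m * c)) :
    x ∈ pPowSub A c := by
  obtain ⟨y, hy⟩ := mem_pPowSub.1 hx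
  have torsion : m • (x - c • y) = 0 := by rw [smul_sub, smul_smul, hy, sub_self]
  simpa only [sub_add_cancel] using add_mem (torsion_le _ torsion) (nsmul_mem_pPowSub c y)

end Multiples

theorem exists_pow_eq_of_isPrimitiveRoot_mul {R : Type*} [CommRing R] [IsDomain R] {c m : ℕ}
    [NeZero c] [NeZero m] {ζ ξ : Rˣ} (hζ : IsPrimitiveRoot ζ (m * c)) (hξ : ξ ^ m = 1) :
    ∃ η : Rˣ, η ^ c = ξ := by
  have hζc : IsPrimitiveRoot (ζ ^ c) m := hζ.pow (NeZero.pos (m * c)) (mul_comm m c)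
  obtain ⟨i, -, hi⟩ := hζc.eq_pow_of_mem_rootsOfUnity ((mem_rootsOfUnity m ξ).2 hξ)
  exact ⟨ζ ^ i, by rw [pow_right_comm, hi]⟩

namespace MilnorK

variable {K : Type*} [Field K] {q : ℕ}

theorem symbol_update_mul (f : Fin q → Kˣ) (i : Fin q) (a b : Kˣ) :
    symbol K q (Function.update f i (a * b)) =
      symbol K q (Function.update f i a) + symbol K q (Function.update f i b) := by
  rw [← sub_eq_zero, ← sub_sub]
  exact (QuotientAddGroup.eq_zero_iff _).2
    (AddSubgroup.subset_closure (Or.inl ⟨f, i, a, b, rfl⟩))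

/-- The Milnor symbol `{f 0, …, a, …, f (q - 1)}` as a homomorphism in its `i`-th entry `a`; the
source is `Additive Kˣ` because `Kˣ` is written multiplicatively. -/
def symbolHom (f : Fin q → Kˣ) (i : Fin q) : Additive Kˣ →+ MilnorK K q :=
  AddMonoidHom.mk' (fun a ↦ symbol K q (Function.update f i a.toMul))
    fun a b ↦ symbol_update_mul f i a.toMul b.toMul

theorem symbol_update_pow (f : Fin q → Kˣ) (i : Fin q) (a : Kˣ) (m : ℕ) :
    symbol K q (Function.update f i (a ^ m)) = m • symbol K q (Function.update f i a) :=
  map_nsmul (symbolHom f i) m (Additive.ofMul a)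

theorem symbol_cons_pow (a : Kˣ) (f : Fin q → Kˣ) (m : ℕ) :
    symbol K (q + 1) (Fin.cons (a ^ m) f) = m • symbol K (q + 1) (Fin.cons a f) := by
  simpa only [Fin.update_cons_zero] using symbol_update_pow (Fin.cons a f) 0 a m

theorem closure_range_symbol : AddSubgroup.closure (Set.range (symbol K q)) = ⊤ := by
  rw [eq_top_iff]
  rintro ⟨y⟩ -
  induction y using FreeAbelianGroup.induction_on with
  | zero => exact zero_mem _
  | of f => exact AddSubgroup.subset_closure ⟨f, rfl⟩
  | neg _ hf => exact neg_mem hf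
  | add _ _ hy hz => exact add_mem hy hz

theorem range_le_iff {A : Type*} [AddGroup A] {φ : MilnorK K q →+ A} {S : AddSubgroup A} :
    φ.range ≤ S ↔ ∀ f, φ (symbol K q f) ∈ S := by
  rw [AddMonoidHom.range_eq_map, ← closure_range_symbol, AddSubgroup.map_le_iff_le_comap,
    AddSubgroup.closure_le, Set.range_subset_iff]
  rfl

theorem range_le_pPowSub_of_symbol_cons_pow {P : MilnorK K q →+ MilnorK K (q + 1)} {a : Kˣ} {c : ℕ}
    (hP : ∀ f, P (symbol K q f) = symbol K (q + 1) (Fin.cons (a ^ c) f)) :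
    P.range ≤ pPowSub (MilnorK K (q + 1)) c := by
  refine range_le_iff.2 fun f ↦ ?_
  rw [hP, symbol_cons_pow]
  exact nsmul_mem_pPowSub c _

end MilnorK

theorem milnor_ker_p_le_pow_general
    (K : Type*) [Field K] (p n r : ℕ) [NeZero p] (hn : 1 ≤ n)
    (ζ : Kˣ) (hζ : IsPrimitiveRoot ζ (p ^ n))
    (ζp : Kˣ) (hζp : IsPrimitiveRoot ζp p)
    (Pζp : MilnorK K r →+ MilnorK K (r + 1))
    (hPζp : ∀ f : Fin r → Kˣ,
      Pζp (MilnorK.symbol K r f) = MilnorK.symbol K (r + 1) (Fin.cons ζp f))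
    (hker : ∀ x : MilnorK K (r + 1), p • x = 0 → x ∈ Pζp.range) :
    (∀ x : MilnorK K (r + 1), p • x = 0 → x ∈ pPowSub (MilnorK K (r + 1)) (p ^ (n - 1))) ∧
    (∀ x : MilnorK K (r + 1), p • x ∈ pPowSub (MilnorK K (r + 1)) (p ^ n) →
      x ∈ pPowSub (MilnorK K (r + 1)) (p ^ (n - 1))) := by
  have hpow : p ^ n = p * p ^ (n - 1) := (mul_pow_sub_one (Nat.ne_zero_of_lt hn) p).symm
  rw [hpow] at hζ ⊢
  obtain ⟨η, rfl⟩ := exists_pow_eq_of_isPrimitiveRoot_mul hζ hζp.pow_eq_one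
  have torsion_le (x : MilnorK K (r + 1)) (hx : p • x = 0) :
      x ∈ pPowSub (MilnorK K (r + 1)) (p ^ (n - 1)) :=
    MilnorK.range_le_pPowSub_of_symbol_cons_pow hPζp (hker x hx)
  exact ⟨torsion_le, fun _ ↦ mem_pPowSub_of_nsmul_mem_pPowSub_mul torsion_le⟩

/-- Let `K` be a field of characteristic `0` containing a primitive `p^n`-th root of
unity.  The kernel of multiplication by `p` on `K_q^M(K)` (here `q = r + 1`), which by
Suslin's theorem equals `{ζ_p}·K_{q-1}^M(K)` for `ζ_p` a primitive `p`-th root of unity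
(assumed as the hypothesis `hker`, with the product with `ζ_p` the additive map `Pζp`
determined on symbols by `hPζp`), is contained in `p^{n-1} K_q^M(K)`; consequently, if
`p·x ∈ p^n K_q^M(K)` then `x ∈ p^{n-1} K_q^M(K)`. -/
theorem milnor_ker_p_le_pow
    (K : Type*) [Field K] [CharZero K] (p n r : ℕ) [Fact p.Prime] (hn : 1 ≤ n)
    (ζ : Kˣ) (hζ : IsPrimitiveRoot ζ (p ^ n))
    (ζp : Kˣ) (hζp : IsPrimitiveRoot ζp p)
    (Pζp : MilnorK K r →+ MilnorK K (r + 1))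
    (hPζp : ∀ f : Fin r → Kˣ,
      Pζp (MilnorK.symbol K r f) = MilnorK.symbol K (r + 1) (Fin.cons ζp f))
    (hker : ∀ x : MilnorK K (r + 1), p • x = 0 ↔ x ∈ Pζp.range) :
    (∀ x : MilnorK K (r + 1), p • x = 0 → x ∈ pPowSub (MilnorK K (r + 1)) (p ^ (n - 1))) ∧
    (∀ x : MilnorK K (r + 1), p • x ∈ pPowSub (MilnorK K (r + 1)) (p ^ n) →
      x ∈ pPowSub (MilnorK K (r + 1)) (p ^ (n - 1))) := by
  have : NeZero p := ⟨(Fact.out : p.Prime).ne_zero⟩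
  exact milnor_ker_p_le_pow_general K p n r hn ζ hζ ζp hζp Pζp hPζp fun x ↦ (hker x).1
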